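/- For all integers l, q, r ≥ 0 and n ≥ l, Σ_{k=l}^{n} ⟦n+r, k+r⟧_r · C(k, l) · B_{k−l}(q+1) = ((l+1)/(n+1)) · ⟦n+q+r+1, l+q+r+1⟧_{q+r}, where B_j(x) denotes the j-th Bernoulli polynomial and C(a,b) is a binomial coefficient. -/

import Mathlib

/-- The `r`-Stirling numbers of the first kind `⟦n,k⟧_r`: `⟦r,r⟧_r = 1`,
`⟦n,k⟧_r = 0` if `n < r` or `k < r`, and
`⟦n,k⟧_r = (n-1)·⟦n-1,k⟧_r + ⟦n-1,k-1⟧_r` for `n > r`. -/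
def rStirling1 (r : ℕ) : ℕ → ℕ → ℕ
  | 0, k => if r = 0 ∧ k = 0 then 1 else 0
  | (n+1), k =>
    if n + 1 < r ∨ k < r then 0
    else if n + 1 = r then (if k = r then 1 else 0)
    else if k = 0 then 0
    else n * rStirling1 r n k + rStirling1 r n (k - 1)

/-- The (unsigned) Stirling numbers of the first kind. -/
def stirling1 : ℕ → ℕ → ℕ := rStirling1 0

/-!
The coefficients of the shifted rising factorial `(X + r)(X + r + 1)⋯(X + r + n - 1)`, which is
the Taylor shift `taylor r (ascPochhammer _ n)`, are the numbers `⟦n + r, k + r⟧_r`. Umbral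
evaluation at the Bernoulli polynomials, `X ^ k ↦ B_k(x)`, therefore sends the `l`-th Hasse
derivative of this polynomial to the sum in question. Umbral evaluation turns a forward difference
into a derivative, forward differences commute with Hasse derivatives, and the rising factorial
starting at `X + r` is `1 / (n + 1)` times the forward difference of the one of length `n + 1`
starting at `X + r - 1`. The sum is thus `(l + 1) / (n + 1)` times a Hasse derivative of order
`l + 1`, whose value at `x = q + 1` is a coefficient of the rising factorial shifted by `q + r`.
-/

open Polynomial

theorem rStirling1_self_left (r k : ℕ) : rStirling1 r r k = if k = r then 1 else 0 := by
  cases r <;> simp only [rStirling1] <;> grind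

theorem rStirling1_eq_zero_of_lt {r k : ℕ} (n : ℕ) (hk : k < r) : rStirling1 r n k = 0 := by
  cases n <;> simp only [rStirling1] <;> grind

theorem rStirling1_succ_succ {r n : ℕ} (k : ℕ) (hn : r ≤ n) :
    rStirling1 r (n + 1) (k + 1) = n * rStirling1 r n (k + 1) + rStirling1 r n k := by
  rcases lt_or_ge (k + 1) r with hk | hk
  · simp [rStirling1_eq_zero_of_lt _ hk, rStirling1_eq_zero_of_lt n (k.lt_succ_self.trans hk)]
  · rw [rStirling1, if_neg (by omega), if_neg (by omega), if_neg k.succ_ne_zero, Nat.add_sub_cancel]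

theorem rStirling1_succ_self {r n : ℕ} (hn : r ≤ n) :
    rStirling1 r (n + 1) r = n * rStirling1 r n r := by
  rcases r with _ | r
  · cases n <;> simp [rStirling1]
  · rw [rStirling1_succ_succ r hn, rStirling1_eq_zero_of_lt n r.lt_succ_self, add_zero]

theorem natDegree_ascPochhammer_le (S : Type*) [Semiring S] (n : ℕ) :
    (ascPochhammer S n).natDegree ≤ n := by
  rw [← ascPochhammer_map (Nat.castRingHom S)]
  exact natDegree_map_le.trans (ascPochhammer_natDegree ℕ n).le

theorem taylor_ascPochhammer_succ {R : Type*} [CommSemiring R] (a : R) (n : ℕ) :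
    taylor a (ascPochhammer R (n + 1)) = taylor a (ascPochhammer R n) * (X + C (a + n)) := by
  rw [ascPochhammer_succ_right, taylor_mul, map_add, taylor_X, ← C_eq_natCast, taylor_C, C_add,
    add_assoc]

theorem taylor_one_sub_taylor_ascPochhammer_succ {R : Type*} [CommRing R] (a : R) (n : ℕ) :
    taylor 1 (taylor a (ascPochhammer R (n + 1))) - taylor a (ascPochhammer R (n + 1)) =
      (n + 1) • taylor (a + 1) (ascPochhammer R n) := by
  have h : taylor 1 (ascPochhammer R (n + 1)) =
      ascPochhammer R (n + 1) + (n + 1) • taylor 1 (ascPochhammer R n) := by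
    simpa only [taylor_apply, C_1] using ascPochhammer_succ_comp_X_add_one R n
  rw [taylor_taylor, add_comm 1 a, ← taylor_taylor, h, map_add, map_nsmul, taylor_taylor,
    add_sub_cancel_left]

theorem coeff_taylor_ascPochhammer {R : Type*} [CommSemiring R] (r n k : ℕ) :
    (taylor (r : R) (ascPochhammer R n)).coeff k = rStirling1 r (n + r) (k + r) := by
  induction n generalizing k with
  | zero => simp [rStirling1_self_left, coeff_one]
  | succ n ih =>
    rw [taylor_ascPochhammer_succ, mul_add, coeff_add, coeff_mul_C, add_right_comm n 1 r]
    rcases k with _ | k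
    · rw [mul_coeff_zero, coeff_X_zero, ih, zero_add, rStirling1_succ_self (r.le_add_left n)]
      push_cast
      ring
    · rw [coeff_mul_X, ih, ih, add_right_comm k 1 r, rStirling1_succ_succ _ (r.le_add_left n)]
      push_cast
      ring

theorem hasseDeriv_taylor {R : Type*} [Semiring R] (l : ℕ) (r : R) (f : R[X]) :
    hasseDeriv l (taylor r f) = taylor r (hasseDeriv l f) := by
  ext i
  rw [hasseDeriv_coeff, taylor_coeff, taylor_coeff, ← LinearMap.comp_apply, hasseDeriv_comp,
    LinearMap.smul_apply, eval_smul, nsmul_eq_mul, Nat.choose_symm_add]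

theorem derivative_hasseDeriv {R : Type*} [Semiring R] (l : ℕ) (f : R[X]) :
    derivative (hasseDeriv l f) = (l + 1) • hasseDeriv (l + 1) f := by
  rw [← hasseDeriv_one, ← LinearMap.comp_apply, hasseDeriv_comp, Nat.choose_one_right, add_comm,
    LinearMap.smul_apply]

section BernoulliEval

variable {A : Type*} [CommRing A] [Algebra ℚ A]

/-- Umbral evaluation at the Bernoulli polynomials: the linear functional sending `X ^ k` to the
value `B_k(x)` of the `k`-th Bernoulli polynomial. -/
noncomputable def bernoulliEval (x : A) : A[X] →ₗ[A] A :=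
  lsum fun k ↦ LinearMap.toSpanSingleton A A (aeval x (Polynomial.bernoulli k))

theorem bernoulliEval_monomial (x : A) (k : ℕ) (a : A) :
    bernoulliEval x (monomial k a) = a * aeval x (Polynomial.bernoulli k) := by
  simp [bernoulliEval, lsum_apply]

theorem sum_choose_mul_aeval_bernoulli (x : A) (k : ℕ) :
    ∑ i ∈ Finset.range k, (k.choose i : A) * aeval x (Polynomial.bernoulli i) =
      k * x ^ (k - 1) := by
  rcases k with _ | k
  · simp
  · simpa [Algebra.smul_def, aeval_monomial, add_one_mul] using
      congrArg (aeval x) (Polynomial.sum_bernoulli k)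

theorem bernoulliEval_taylor_one_sub (x : A) (p : A[X]) :
    bernoulliEval x (taylor 1 p - p) = (derivative p).eval x := by
  suffices h : bernoulliEval x ∘ₗ (taylor 1 - LinearMap.id) = leval x ∘ₗ derivative from
    LinearMap.congr_fun h p
  ext k
  have hdiff : taylor 1 (monomial k (1 : A)) - monomial k 1 =
      ∑ i ∈ Finset.range k, monomial i (k.choose i : A) := by
    rw [taylor_monomial, C_1, one_mul, add_pow, Finset.sum_range_succ]
    simp [← C_mul_X_pow_eq_monomial, mul_comm]
  have hbern : bernoulliEval x (taylor 1 (monomial k (1 : A)) - monomial k 1) =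
      k * x ^ (k - 1) := by
    rw [hdiff, map_sum]
    simp only [bernoulliEval_monomial, sum_choose_mul_aeval_bernoulli]
  simpa [derivative_monomial] using hbern

theorem bernoulliEval_hasseDeriv (x : A) (l : ℕ) {n : ℕ} {p : A[X]} (hp : p.natDegree ≤ n) :
    bernoulliEval x (hasseDeriv l p) =
      ∑ k ∈ Finset.Icc l n, p.coeff k * k.choose l * aeval x (Polynomial.bernoulli (k - l)) := by
  have hterm (k : ℕ) : bernoulliEval x (hasseDeriv l (monomial k (p.coeff k))) =
      p.coeff k * k.choose l * aeval x (Polynomial.bernoulli (k - l)) := by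
    rw [hasseDeriv_monomial, bernoulliEval_monomial, mul_comm (k.choose l : A)]
  conv_lhs => rw [p.as_sum_range' (n + 1) (Nat.lt_succ_of_le hp), map_sum, map_sum]
  simp only [hterm]
  refine (Finset.sum_subset (fun k hk ↦ ?_) fun k hk hkl ↦ ?_).symm
  · grind
  · have hlt : k < l := by grind
    simp [Nat.choose_eq_zero_of_lt hlt]

theorem bernoulliEval_hasseDeriv_taylor_ascPochhammer (a x : A) (l n : ℕ) :
    (n + 1) • bernoulliEval x (hasseDeriv l (taylor (a + 1) (ascPochhammer A n))) =
      (l + 1) • (taylor (x + a) (ascPochhammer A (n + 1))).coeff (l + 1) := by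
  set f := taylor a (ascPochhammer A (n + 1)) with hf
  calc (n + 1) • bernoulliEval x (hasseDeriv l (taylor (a + 1) (ascPochhammer A n)))
    _ = bernoulliEval x (hasseDeriv l (taylor 1 f - f)) := by
      rw [taylor_one_sub_taylor_ascPochhammer_succ, map_nsmul, map_nsmul]
    _ = (derivative (hasseDeriv l f)).eval x := by
      rw [map_sub, hasseDeriv_taylor, bernoulliEval_taylor_one_sub]
    _ = (l + 1) • (taylor x f).coeff (l + 1) := by
      rw [derivative_hasseDeriv, eval_smul, taylor_coeff]
    _ = (l + 1) • (taylor (x + a) (ascPochhammer A (n + 1))).coeff (l + 1) := by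
      rw [hf, taylor_taylor]

theorem stmt19_general (a x : A) (l n : ℕ) :
    ∑ k ∈ Finset.Icc l n, (taylor a (ascPochhammer A n)).coeff k * k.choose l *
        aeval (x + 1) (Polynomial.bernoulli (k - l)) =
      ((l + 1) / (n + 1) : ℚ) • (taylor (x + a) (ascPochhammer A (n + 1))).coeff (l + 1) := by
  have hdeg : (taylor a (ascPochhammer A n)).natDegree ≤ n :=
    (natDegree_taylor _ a).trans_le (natDegree_ascPochhammer_le A n)
  have hscaled := bernoulliEval_hasseDeriv_taylor_ascPochhammer (a - 1) (x + 1) l n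
  rw [sub_add_cancel, add_add_sub_cancel, bernoulliEval_hasseDeriv _ _ hdeg,
    ← Nat.cast_smul_eq_nsmul ℚ, ← Nat.cast_smul_eq_nsmul ℚ] at hscaled
  have hn : ((n + 1 : ℕ) : ℚ) ≠ 0 := Nat.cast_ne_zero.mpr n.succ_ne_zero
  rw [(eq_inv_smul_iff₀ hn).mpr hscaled, smul_smul, div_eq_inv_mul, Nat.cast_add_one,
    Nat.cast_add_one]

end BernoulliEval

theorem stmt19 (l q r n : ℕ) (h : l ≤ n) :
    ∑ k ∈ Finset.Icc l n,
        (rStirling1 r (n + r) (k + r) : ℚ) * k.choose l *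
          (Polynomial.bernoulli (k - l)).eval ((q : ℚ) + 1) =
      ((l + 1) / (n + 1) : ℚ) * rStirling1 (q + r) (n + q + r + 1) (l + q + r + 1) := by
  have hindex (m : ℕ) : m + q + r + 1 = m + 1 + (q + r) := by ring
  simpa only [hindex, ← coeff_taylor_ascPochhammer, Nat.cast_add, coe_aeval_eq_eval, smul_eq_mul]
    using stmt19_general (r : ℚ) q l n
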